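/- arXiv:2602.09382 — 2 statements merged into one kernel-verified Lean document; each statement's English description precedes it below -/
import Mathlib

section
/- As h → 0⁺, sup_{r∈[0,1]} |α_h(r) − (4−6r)| → 0 and sup_{r∈[0,1]} |β_h(r) − (12r−6)| → 0. (Lemma 1 (continuity of the detrending coefficients) of the paper.) -/
open Filter Topology

/-- `D h = h(1−e^{−2h}) − 2(1−e^{−h})²`. -/
noncomputable def D (h : ℝ) : ℝ :=
  h * (1 - Real.exp (-2 * h)) - 2 * (1 - Real.exp (-h)) ^ 2

/-- The detrending coefficient `α_h(r)`. -/
noncomputable def alphaCoeff (h r : ℝ) : ℝ :=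
  h * (1 - Real.exp (-2 * h) - 2 * (1 - Real.exp (-h)) * Real.exp (-h * r) +
      2 * h * Real.exp (-h * r) - 2 * (1 - Real.exp (-h))) / D h

/-- The detrending coefficient `β_h(r)`. -/
noncomputable def betaCoeff (h r : ℝ) : ℝ :=
  2 * h ^ 2 * ((1 - Real.exp (-h)) - h * Real.exp (-h * r)) / D h

/-- Third-order Taylor expansion of `exp (-h)` with remainder `h ^ 4 * a`. -/
lemma exists_exp_neg_eq_taylor_three {h : ℝ} (h0 : 0 < h) (h1 : h ≤ 1) :
    ∃ a : ℝ, |a| ≤ 1 ∧ Real.exp (-h) = 1 - h + h ^ 2 / 2 - h ^ 3 / 6 + h ^ 4 * a := by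
  have hb := Real.exp_bound (x := -h) (by rw [abs_neg, abs_of_pos h0]; exact h1)
    (n := 4) (by norm_num)
  rw [abs_neg, abs_of_pos h0] at hb
  norm_num [Finset.sum_range_succ, Nat.factorial] at hb
  refine ⟨(Real.exp (-h) - (1 - h + h ^ 2 / 2 - h ^ 3 / 6)) / h ^ 4, ?_, by field_simp; ring⟩
  rw [abs_div, abs_of_pos (pow_pos h0 4), div_le_one (pow_pos h0 4)]
  have hp := pow_pos h0 4
  rw [abs_le] at hb ⊢
  constructor <;> nlinarith

/-- First-order Taylor expansion of `exp (-h * r)`, with a remainder uniform in `r ∈ [0, 1]`. -/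
lemma exists_exp_neg_mul_eq_taylor_one {h r : ℝ} (h0 : 0 < h) (h1 : h ≤ 1) (r0 : 0 ≤ r)
    (r1 : r ≤ 1) : ∃ b : ℝ, |b| ≤ 1 ∧ Real.exp (-h * r) = 1 - h * r + h ^ 2 * b := by
  have hx : |-h * r| ≤ h := by
    rw [abs_mul, abs_neg, abs_of_pos h0, abs_of_nonneg r0]
    exact mul_le_of_le_one_right h0.le r1
  have hb := Real.abs_exp_sub_one_sub_id_le (hx.trans h1)
  refine ⟨(Real.exp (-h * r) - (1 - h * r)) / h ^ 2, ?_, by field_simp; ring⟩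
  rw [abs_div, abs_of_pos (pow_pos h0 2), div_le_one (pow_pos h0 2)]
  calc |Real.exp (-h * r) - (1 - h * r)| = |Real.exp (-h * r) - 1 - -h * r| := by ring_nf
    _ ≤ (-h * r) ^ 2 := hb
    _ ≤ h ^ 2 := sq_le_sq.2 (hx.trans (le_abs_self h))

lemma abs_quotient_sub_le {h L q v : ℝ} (h0 : 0 < h) (h1 : h ≤ 1 / 48) (hv : |v| ≤ 4)
    (hq : |q| ≤ 9) (hL : |L| ≤ 6) :
    |h ^ 4 * (L / 6 + h * q) / (h ^ 4 * (1 / 6 + h * v)) - L| ≤ 396 * h := by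
  have hd : 1 / 12 ≤ 1 / 6 + h * v := by nlinarith [neg_le_of_abs_le hv]
  have hd0 : 0 < 1 / 6 + h * v := by linarith
  have hsplit : h ^ 4 * (L / 6 + h * q) / (h ^ 4 * (1 / 6 + h * v)) - L =
      h * (q - L * v) / (1 / 6 + h * v) := by
    rw [mul_div_mul_left _ _ (pow_pos h0 4).ne', eq_div_iff hd0.ne', sub_mul,
      div_mul_cancel₀ _ hd0.ne']
    ring
  have hLv : |L * v| ≤ 6 * 4 := by
    rw [abs_mul]
    exact mul_le_mul hL hv (abs_nonneg v) (by norm_num)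
  have hn : |q - L * v| ≤ 33 := by
    have := abs_sub q (L * v)
    linarith
  rw [hsplit, abs_div, abs_mul, abs_of_pos h0, abs_of_pos hd0, div_le_iff₀ hd0]
  nlinarith [mul_le_mul_of_nonneg_left hn h0.le, mul_le_mul_of_nonneg_left hd h0.le]

lemma abs_mul_le_of_abs_le {x y c d : ℝ} (hx : |x| ≤ c) (hy : |y| ≤ d) : |x * y| ≤ c * d := by
  rw [abs_mul]
  exact mul_le_mul hx hy (abs_nonneg y) ((abs_nonneg x).trans hx)

/-- Both coefficients are within `396 * h` of their limits, uniformly in `r ∈ [0, 1]`. -/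
lemma abs_coeff_sub_le {h r : ℝ} (h0 : 0 < h) (h1 : h ≤ 1 / 48) (r0 : 0 ≤ r) (r1 : r ≤ 1) :
    |alphaCoeff h r - (4 - 6 * r)| ≤ 396 * h ∧ |betaCoeff h r - (12 * r - 6)| ≤ 396 * h := by
  obtain ⟨a, ha, hE⟩ := exists_exp_neg_eq_taylor_three h0 (by linarith)
  obtain ⟨b, hb, hF⟩ := exists_exp_neg_mul_eq_taylor_one h0 (by linarith) r0 r1
  have hE2 : Real.exp (-2 * h) = Real.exp (-h) ^ 2 := by
    rw [← Real.exp_nat_mul]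
    ring_nf
  have hh : |h| ≤ 1 / 48 := by rwa [abs_of_pos h0]
  have hr : |r| ≤ 1 := by rwa [abs_of_nonneg r0]
  have hha := abs_le.1 (abs_mul_le_of_abs_le hh ha)
  obtain ⟨w, hw⟩ : ∃ w, w = 1 / 6 - h * a := ⟨_, rfl⟩
  have hwb : |w| ≤ 1 / 3 := by rw [abs_le]; constructor <;> linarith
  have hhw := abs_le.1 (abs_mul_le_of_abs_le hh hwb)
  obtain ⟨s, hs⟩ : ∃ s, s = -1 / 2 + h * w := ⟨_, rfl⟩
  have hsb : |s| ≤ 1 := by rw [abs_le]; constructor <;> linarith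
  rw [abs_le] at ha
  obtain ⟨t, ht⟩ : ∃ t, t = -1 / 6 + h * a + 2 * a := ⟨_, rfl⟩
  have htb : |t| ≤ 3 := by rw [abs_le]; constructor <;> linarith
  have hst := abs_le.1 (abs_mul_le_of_abs_le hh (abs_mul_le_of_abs_le hsb htb))
  obtain ⟨g, hg⟩ : ∃ g, g = 1 / 2 - h * w := ⟨_, rfl⟩
  have hgb : |g| ≤ 1 := by rw [abs_le]; constructor <;> linarith
  have hbg := abs_le.1 (abs_mul_le_of_abs_le hb hgb)
  have hss := abs_le.1 (abs_mul_le_of_abs_le hsb hsb)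
  have hrw := abs_le.1 (abs_mul_le_of_abs_le hr hwb)
  rw [abs_le] at hb hwb hsb htb
  have hD : D h = h ^ 4 * (1 / 6 + h * (s / 6 + t + h * (s * t))) := by
    rw [D, hE2, hE, hs, ht, hw]
    ring
  have hv : |s / 6 + t + h * (s * t)| ≤ 4 := by
    rw [abs_le]
    constructor <;> linarith
  constructor
  · have hN : alphaCoeff h r = h ^ 4 * ((4 - 6 * r) / 6 +
        h * (-2 * w - s * s + 2 * a + 2 * (r * w) + 2 * (b * g))) / D h := by
      rw [alphaCoeff, hE2, hE, hF, hg, hs, hw]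
      congr 1
      ring
    rw [hN, hD]
    refine abs_quotient_sub_le h0 h1 hv ?_ ?_ <;> rw [abs_le] <;> constructor <;> linarith
  · have hN : betaCoeff h r = h ^ 4 * ((12 * r - 6) / 6 + h * (2 * w - 2 * b)) / D h := by
      rw [betaCoeff, hE, hF, hw]
      congr 1
      ring
    rw [hN, hD]
    refine abs_quotient_sub_le h0 h1 hv ?_ ?_ <;> rw [abs_le] <;> constructor <;> linarith

/-- A supremum of absolute values bounded by `C * h` for small `h > 0` tends to `0`. -/
lemma tendsto_iSup_abs_of_le_mul {ι : Type*} [Nonempty ι] {f : ℝ → ι → ℝ} {C δ : ℝ} (hδ : 0 < δ)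
    (hf : ∀ h, 0 < h → h ≤ δ → ∀ i, |f h i| ≤ C * h) :
    Tendsto (fun h => ⨆ i, |f h i|) (𝓝[>] 0) (𝓝 0) := by
  have hlim : Tendsto (fun h : ℝ => C * h) (𝓝[>] 0) (𝓝 0) := by
    have : Tendsto (fun h : ℝ => C * h) (𝓝 0) (𝓝 (C * 0)) := tendsto_id.const_mul C
    rw [mul_zero] at this
    exact this.mono_left nhdsWithin_le_nhds
  refine squeeze_zero' (.of_forall fun h => Real.iSup_nonneg fun i => abs_nonneg _) ?_ hlim
  filter_upwards [Ioc_mem_nhdsGT hδ] with h hh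
  exact ciSup_le (hf h hh.1 hh.2)

theorem stmt_11 :
    Tendsto (fun h : ℝ => ⨆ r : Set.Icc (0 : ℝ) 1, |alphaCoeff h r - (4 - 6 * (r : ℝ))|)
      (𝓝[>] 0) (𝓝 0) ∧
    Tendsto (fun h : ℝ => ⨆ r : Set.Icc (0 : ℝ) 1, |betaCoeff h r - (12 * (r : ℝ) - 6)|)
      (𝓝[>] 0) (𝓝 0) := by
  have hδ : (0 : ℝ) < 1 / 48 := by norm_num
  exact ⟨tendsto_iSup_abs_of_le_mul hδ fun h h0 h1 r => (abs_coeff_sub_le h0 h1 r.2.1 r.2.2).1,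
    tendsto_iSup_abs_of_le_mul hδ fun h h0 h1 r => (abs_coeff_sub_le h0 h1 r.2.1 r.2.2).2⟩
end

section
/- Let (Ω, F, P) be a probability space, let M > 0, let ρ ∈ (0,1), and let U_1, U_2, … be real-valued random variables such that E|U_j U_k| ≤ M for all j, k ≥ 1 (in particular each U_j is square-integrable). For l ≥ 1 define Ũ_l = Σ_{j=1}^l ρ^{l−j} U_j. Then for all integers i and m ≥ 0 with m < i − 1: E| ρ^{2m+2}(Ũ_{i−m−1}² − E[Ũ_{i−m−1}²]) + 2ρ^{m+1} Ũ_{i−m−1} Σ_{j=i−m}^{i} ρ^{i−j} U_j | ≤ 2M(1−ρ)^{−2}(ρ^{2m+2} + ρ^{m+1}). (The L¹-near-epoch-dependence bound established in Section SM.3.2.3 of the paper.) -/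
open MeasureTheory

/-- `Ũ_l = Σ_{j=1}^l ρ^{l−j} U_j`. -/
noncomputable def Utilde {Ω : Type*} (ρ : ℝ) (U : ℕ → Ω → ℝ) (l : ℕ) (ω : Ω) : ℝ :=
  ∑ j ∈ Finset.Icc 1 l, ρ ^ (l - j) * U j ω

/-- The weights `ρ^(l-j)` over any integer interval ending at `l` sum to at most `(1-ρ)⁻¹`. -/
lemma sum_Icc_pow_sub_le {ρ : ℝ} (h0 : 0 ≤ ρ) (h1 : ρ < 1) (a l : ℕ) :
    ∑ j ∈ Finset.Icc a l, ρ ^ (l - j) ≤ (1 - ρ)⁻¹ := by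
  calc ∑ j ∈ Finset.Icc a l, ρ ^ (l - j)
      ≤ ∑ j ∈ Finset.range (l + 1), ρ ^ (l - j) := by
        refine Finset.sum_le_sum_of_subset_of_nonneg (fun j hj => ?_)
          fun j _ _ => pow_nonneg h0 _
        simp only [Finset.mem_Icc, Finset.mem_range] at *
        lia
    _ = ∑ j ∈ Finset.range (l + 1), ρ ^ j := by
        simpa using Finset.sum_range_reflect (fun j => ρ ^ j) (l + 1)
    _ ≤ ∑' j, ρ ^ j :=
        (summable_geometric_of_lt_one h0 h1).sum_le_tsum _ fun j _ => pow_nonneg h0 j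
    _ = (1 - ρ)⁻¹ := tsum_geometric_of_lt_one h0 h1

section WeightedSums

variable {Ω ι : Type*} [MeasurableSpace Ω] {P : Measure Ω} {U : ι → Ω → ℝ} {s t : Finset ι}

lemma integrable_weightedSum_mul_weightedSum (a b : ι → ℝ)
    (hint : ∀ j ∈ s, ∀ k ∈ t, Integrable (fun ω => U j ω * U k ω) P) :
    Integrable (fun ω => (∑ j ∈ s, a j * U j ω) * ∑ k ∈ t, b k * U k ω) P := by
  simp_rw [Finset.sum_mul_sum, mul_mul_mul_comm _ (U _ _)]
  exact integrable_finsetSum _ fun j hj => integrable_finsetSum _ fun k hk =>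
    (hint j hj k hk).const_mul _

lemma integral_abs_weightedSum_mul_weightedSum_le {a b : ι → ℝ} {M : ℝ}
    (ha : ∀ j, 0 ≤ a j) (hb : ∀ k, 0 ≤ b k)
    (hint : ∀ j ∈ s, ∀ k ∈ t, Integrable (fun ω => U j ω * U k ω) P)
    (hbd : ∀ j ∈ s, ∀ k ∈ t, ∫ ω, |U j ω * U k ω| ∂P ≤ M) :
    ∫ ω, |(∑ j ∈ s, a j * U j ω) * ∑ k ∈ t, b k * U k ω| ∂P ≤
      M * ((∑ j ∈ s, a j) * ∑ k ∈ t, b k) := by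
  have hterm : ∀ j ∈ s, ∀ k ∈ t,
      Integrable (fun ω => a j * b k * |U j ω * U k ω|) P :=
    fun j hj k hk => (hint j hj k hk).abs.const_mul _
  calc ∫ ω, |(∑ j ∈ s, a j * U j ω) * ∑ k ∈ t, b k * U k ω| ∂P
      ≤ ∫ ω, ∑ j ∈ s, ∑ k ∈ t, a j * b k * |U j ω * U k ω| ∂P := by
        refine integral_mono (integrable_weightedSum_mul_weightedSum a b hint).abs
          (integrable_finsetSum _ fun j hj => integrable_finsetSum _ fun k hk =>
            hterm j hj k hk) fun ω => ?_
        simp only [Finset.sum_mul_sum]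
        refine (Finset.abs_sum_le_sum_abs _ _).trans (Finset.sum_le_sum fun j _ =>
          (Finset.abs_sum_le_sum_abs _ _).trans (Finset.sum_le_sum fun k _ => ?_))
        rw [mul_mul_mul_comm, abs_mul, abs_of_nonneg (mul_nonneg (ha j) (hb k))]
    _ = ∑ j ∈ s, ∑ k ∈ t, a j * b k * ∫ ω, |U j ω * U k ω| ∂P := by
        rw [integral_finsetSum _ fun j hj => integrable_finsetSum _ fun k hk => hterm j hj k hk]
        refine Finset.sum_congr rfl fun j hj => ?_
        rw [integral_finsetSum _ fun k hk => hterm j hj k hk]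
        exact Finset.sum_congr rfl fun k _ => integral_const_mul _ _
    _ ≤ ∑ j ∈ s, ∑ k ∈ t, a j * b k * M :=
        Finset.sum_le_sum fun j hj => Finset.sum_le_sum fun k hk =>
          mul_le_mul_of_nonneg_left (hbd j hj k hk) (mul_nonneg (ha j) (hb k))
    _ = M * ((∑ j ∈ s, a j) * ∑ k ∈ t, b k) := by
        simp_rw [Finset.sum_mul_sum, Finset.mul_sum, mul_comm M]

end WeightedSums

/-- A centred square plus a cross term is controlled in `L¹` by the second moments. -/
lemma integral_abs_centered_sq_add_mul_le {Ω : Type*} [MeasurableSpace Ω] {P : Measure Ω}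
    [IsProbabilityMeasure P] {X Y : Ω → ℝ} {c d : ℝ} (hc : 0 ≤ c) (hd : 0 ≤ d)
    (hX : Integrable (fun ω => X ω ^ 2) P) (hXY : Integrable (fun ω => X ω * Y ω) P) :
    ∫ ω, |c * (X ω ^ 2 - ∫ ω', X ω' ^ 2 ∂P) + 2 * d * X ω * Y ω| ∂P ≤
      2 * c * ∫ ω, X ω ^ 2 ∂P + 2 * d * ∫ ω, |X ω * Y ω| ∂P := by
  set e := ∫ ω', X ω' ^ 2 ∂P with he_def
  have he : 0 ≤ e := integral_nonneg fun ω => sq_nonneg _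
  have hsq : Integrable (fun ω => c * (X ω ^ 2 + e)) P :=
    (hX.add (integrable_const e)).const_mul c
  have hcross : Integrable (fun ω => 2 * d * |X ω * Y ω|) P := hXY.abs.const_mul _
  calc ∫ ω, |c * (X ω ^ 2 - e) + 2 * d * X ω * Y ω| ∂P
      ≤ ∫ ω, (c * (X ω ^ 2 + e) + 2 * d * |X ω * Y ω|) ∂P := by
        refine integral_mono_of_nonneg (.of_forall fun ω => abs_nonneg _) (hsq.add hcross)
          (.of_forall fun ω => ?_)
        refine (abs_add_le _ _).trans (add_le_add ?_ ?_)
        · rw [abs_mul, abs_of_nonneg hc]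
          refine mul_le_mul_of_nonneg_left (abs_le.2 ⟨?_, ?_⟩) hc <;>
            linarith [sq_nonneg (X ω)]
        · rw [mul_assoc, abs_mul, abs_of_nonneg (by positivity : 0 ≤ 2 * d)]
    _ = 2 * c * e + 2 * d * ∫ ω, |X ω * Y ω| ∂P := by
        rw [integral_add hsq hcross, integral_const_mul, integral_const_mul,
          integral_add hX (integrable_const e), integral_const, ← he_def]
        simp only [probReal_univ, one_smul]
        ring

theorem stmt_18 {Ω : Type*} [MeasurableSpace Ω] (P : Measure Ω)
    [IsProbabilityMeasure P] (M : ℝ) (hM : 0 < M) (ρ : ℝ)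
    (hρ : ρ ∈ Set.Ioo (0 : ℝ) 1) (U : ℕ → Ω → ℝ)
    (hint : ∀ j k : ℕ, 1 ≤ j → 1 ≤ k →
      Integrable (fun ω => U j ω * U k ω) P)
    (hbd : ∀ j k : ℕ, 1 ≤ j → 1 ≤ k → (∫ ω, |U j ω * U k ω| ∂P) ≤ M) :
    ∀ i m : ℕ, m + 1 < i →
      (∫ ω,
          |ρ ^ (2 * m + 2) *
              ((Utilde ρ U (i - m - 1) ω) ^ 2 -
                ∫ ω', (Utilde ρ U (i - m - 1) ω') ^ 2 ∂P) +
            2 * ρ ^ (m + 1) * Utilde ρ U (i - m - 1) ω *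
              ∑ j ∈ Finset.Icc (i - m) i, ρ ^ (i - j) * U j ω| ∂P) ≤
        2 * M * ((1 - ρ) ^ 2)⁻¹ * (ρ ^ (2 * m + 2) + ρ ^ (m + 1)) := by
  intro i m _
  obtain ⟨h0, h1⟩ := hρ
  set l := i - m - 1
  have hl : ∀ j ∈ Finset.Icc 1 l, 1 ≤ j := fun j hj => (Finset.mem_Icc.1 hj).1
  have hi : ∀ j ∈ Finset.Icc (i - m) i, 1 ≤ j := fun j hj => by
    have := (Finset.mem_Icc.1 hj).1
    lia
  have hpow : ∀ n j : ℕ, 0 ≤ ρ ^ (n - j) := fun n j => pow_nonneg h0.le _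
  have hsum := sum_Icc_pow_sub_le h0.le h1
  have hweights : ∀ a b n k : ℕ,
      M * ((∑ j ∈ Finset.Icc a n, ρ ^ (n - j)) * ∑ j ∈ Finset.Icc b k, ρ ^ (k - j)) ≤
        M * ((1 - ρ) ^ 2)⁻¹ := fun a b n k => by
    rw [← inv_pow, sq]
    exact mul_le_mul_of_nonneg_left
      (mul_le_mul (hsum a n) (hsum b k) (Finset.sum_nonneg fun j _ => hpow k j)
        (inv_nonneg.2 (sub_nonneg.2 h1.le))) hM.le
  have hX : Integrable (fun ω => Utilde ρ U l ω ^ 2) P := by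
    simp_rw [sq]
    exact integrable_weightedSum_mul_weightedSum _ _
      fun j hj k hk => hint j k (hl j hj) (hl k hk)
  have hXY : Integrable (fun ω => Utilde ρ U l ω *
      ∑ j ∈ Finset.Icc (i - m) i, ρ ^ (i - j) * U j ω) P :=
    integrable_weightedSum_mul_weightedSum _ _
      fun j hj k hk => hint j k (hl j hj) (hi k hk)
  have hX_le : ∫ ω, Utilde ρ U l ω ^ 2 ∂P ≤ M * ((1 - ρ) ^ 2)⁻¹ := by
    have h := (integral_abs_weightedSum_mul_weightedSum_le (hpow l) (hpow l)
      (fun j hj k hk => hint j k (hl j hj) (hl k hk))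
      (fun j hj k hk => hbd j k (hl j hj) (hl k hk))).trans (hweights 1 1 l l)
    simpa only [Utilde, ← sq, abs_sq] using h
  have hXY_le : ∫ ω, |Utilde ρ U l ω * ∑ j ∈ Finset.Icc (i - m) i, ρ ^ (i - j) * U j ω| ∂P ≤
      M * ((1 - ρ) ^ 2)⁻¹ :=
    (integral_abs_weightedSum_mul_weightedSum_le (hpow l) (hpow i)
      (fun j hj k hk => hint j k (hl j hj) (hi k hk))
      (fun j hj k hk => hbd j k (hl j hj) (hi k hk))).trans (hweights 1 (i - m) l i)
  calc _ ≤ 2 * ρ ^ (2 * m + 2) * ∫ ω, Utilde ρ U l ω ^ 2 ∂P + 2 * ρ ^ (m + 1) *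
        ∫ ω, |Utilde ρ U l ω * ∑ j ∈ Finset.Icc (i - m) i, ρ ^ (i - j) * U j ω| ∂P :=
        integral_abs_centered_sq_add_mul_le (by positivity) (by positivity) hX hXY
    _ ≤ 2 * ρ ^ (2 * m + 2) * (M * ((1 - ρ) ^ 2)⁻¹) +
        2 * ρ ^ (m + 1) * (M * ((1 - ρ) ^ 2)⁻¹) := by gcongr
    _ = _ := by ring
end
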